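/- Semantic equivalence of wellformed sublevels is syntactic equality. Precisely: (i) if x ∈ E, y ∈ F and ⟦A(E,x,S)⟧σ = ⟦A(F,y,K)⟧σ for every valuation σ, then E = F, x = y and S = K; (ii) if S > 0, K > 0 and ⟦B(E,S)⟧σ = ⟦B(F,K)⟧σ for every valuation σ, then E = F and S = K; (iii) if x ∈ E and K > 0, then there is a valuation σ with ⟦A(E,x,S)⟧σ ≠ ⟦B(F,K)⟧σ. -/

import Mathlib

/-- The impredicative maximum on natural numbers. -/
def imaxN : ℕ → ℕ → ℕ
  | _, 0 => 0
  | i, (j+1) => max i (j+1)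

/-- Sublevels A(E,x,S) and B(E,S). -/
inductive SubLvl where
  | A : Finset ℕ → ℕ → ℕ → SubLvl
  | B : Finset ℕ → ℕ → SubLvl
deriving DecidableEq

/-- Value of a sublevel under a valuation. -/
def evalS (σ : ℕ → ℕ) : SubLvl → ℕ
  | .A E x S => if ∃ y ∈ E, σ y = 0 then 0 else σ x + S
  | .B E S => if ∃ y ∈ E, σ y = 0 then 0 else S

/-- Wellformed sublevels. -/
def Wf : SubLvl → Prop
  | .A E x _ => x ∈ E
  | .B _ S => 0 < S

/-- Semantic comparison of sublevels. -/
def leT (u v : SubLvl) : Prop := ∀ σ : ℕ → ℕ, evalS σ u ≤ evalS σ v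

theorem evalA_ite (E : Finset ℕ) (x S z : ℕ) (hx : x ∈ E) :
    evalS (fun w => if w = z then 0 else 1) (SubLvl.A E x S) = 0 ↔ z ∈ E := by
  by_cases hz : z ∈ E
  · simp [evalS, hz]
  · have : x ≠ z := fun h => hz (h ▸ hx)
    simp [evalS, hz, this]

theorem evalB_ite (E : Finset ℕ) (S z : ℕ) (hS : 0 < S) :
    evalS (fun w => if w = z then 0 else 1) (SubLvl.B E S) = 0 ↔ z ∈ E := by
  by_cases hz : z ∈ E
  · simp [evalS, hz]
  · simp [evalS, hz]; omega

theorem sublevel_semantic_eq_is_syntactic_eq :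
    (∀ (E F : Finset ℕ) (x y S K : ℕ), x ∈ E → y ∈ F →
      (∀ σ : ℕ → ℕ, evalS σ (SubLvl.A E x S) = evalS σ (SubLvl.A F y K)) →
      E = F ∧ x = y ∧ S = K) ∧
    (∀ (E F : Finset ℕ) (S K : ℕ), 0 < S → 0 < K →
      (∀ σ : ℕ → ℕ, evalS σ (SubLvl.B E S) = evalS σ (SubLvl.B F K)) →
      E = F ∧ S = K) ∧
    (∀ (E F : Finset ℕ) (x S K : ℕ), x ∈ E → 0 < K →
      ∃ σ : ℕ → ℕ, evalS σ (SubLvl.A E x S) ≠ evalS σ (SubLvl.B F K)) := by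
  refine ⟨?_, ?_, ?_⟩
  · intro E F x y S K hx hy h
    have hSK : S = K := by simpa [evalS] using h (fun _ => 1)
    refine ⟨?_, ?_, hSK⟩
    · ext z
      rw [← evalA_ite E x S z hx, ← evalA_ite F y K z hy, h]
    · by_contra hne
      have h2 := h (fun w => if w = x then 2 else 1)
      have hp : ∀ G : Finset ℕ, ¬ ∃ w ∈ G, (if w = x then 2 else 1) = 0 := by
        rintro G ⟨w, -, hw⟩
        split_ifs at hw
      simp only [evalS, if_neg (hp _), if_true, if_neg (Ne.symm hne)] at h2
      omega
  · intro E F S K hS hK h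
    refine ⟨?_, by simpa [evalS] using h (fun _ => 1)⟩
    ext z
    rw [← evalB_ite E S z hS, ← evalB_ite F K z hK, h]
  · intro E F x S K hx hK
    by_contra! h
    have h1 : 1 + S = K := by simpa [evalS] using h (fun _ => 1)
    have h2 : 2 + S = K := by simpa [evalS] using h (fun _ => 2)
    omega
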